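/- Let (X, Σ, μ) be a subprobability space and let P = {P_i}_{i=1}^{∞} be a partition of X with h(μ; P) < ∞ such that μ(P_1) = max{μ(P_i) : i ∈ ℕ}. Let Q be a measurable set with P_1 ⊆ Q, and for k ∈ ℕ set Q_k = ⋃_{i=1}^{k} (P_i ∩ Q). Then for every k ∈ ℕ: sh(μ(Q_k)) + Σ_{i=1}^{∞} sh(μ(P_i ∖ Q_k)) ≥ sh(μ(Q)) + Σ_{i=1}^{∞} sh(μ(P_i ∖ Q)); that is, h(μ; {Q_k} ∪ P_{X∖Q_k}) ≥ h(μ; {Q} ∪ P_{X∖Q}). -/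

import Mathlib

open MeasureTheory ENNReal Filter

/-- The Shannon function `sh x = -x * log₂ x` (with `sh 0 = 0`, since `log 0 = 0`). -/
noncomputable def sh (x : ℝ) : ℝ := -x * Real.logb 2 x

/-- A (countable, ℕ-indexed) partition of `X` w.r.t. the measure `μ`:
measurable, pairwise disjoint sets whose union has null complement. -/
def IsPartition {X : Type*} [MeasurableSpace X] (μ : Measure X) (P : ℕ → Set X) : Prop :=
  (∀ i, MeasurableSet (P i)) ∧ Pairwise (Function.onFun Disjoint P) ∧
    μ (Set.univ \ ⋃ i, P i) = 0

/-- The entropy `h(μ; P) = Σ_i sh(μ(P_i)) ∈ [0,∞]` of a countable family of sets. -/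
noncomputable def partEntropy {X : Type*} [MeasurableSpace X]
    (μ : Measure X) (P : ℕ → Set X) : ℝ≥0∞ :=
  ∑' i, ENNReal.ofReal (sh ((μ (P i)).toReal))

/-- An error-control family: a family of measurable sets covering `X`. -/
def IsErrorControl {X : Type*} [MeasurableSpace X] (𝒬 : Set (Set X)) : Prop :=
  (∀ Q ∈ 𝒬, MeasurableSet Q) ∧ ⋃₀ 𝒬 = Set.univ

/-- `P` is `𝒬`-acceptable: every element of `P` is contained in some member of `𝒬`. -/
def Acceptable {X : Type*} (𝒬 : Set (Set X)) (P : ℕ → Set X) : Prop :=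
  ∀ i, ∃ Q ∈ 𝒬, P i ⊆ Q

/-- The entropy `H(μ; 𝒬)`: the infimum of entropies of `𝒬`-acceptable partitions
(`= ∞` if there is none). -/
noncomputable def coverEntropy {X : Type*} [MeasurableSpace X]
    (μ : Measure X) (𝒬 : Set (Set X)) : ℝ≥0∞ :=
  ⨅ (P : ℕ → Set X) (_ : IsPartition μ P) (_ : Acceptable 𝒬 P), partEntropy μ P

theorem sh_eq_aux (x : ℝ) : sh x = Real.negMulLog x / Real.log 2 := by
  simp only [sh, Real.negMulLog, Real.logb]; ring

theorem sh_nonneg_aux {x : ℝ} (h0 : 0 ≤ x) (h1 : x ≤ 1) : 0 ≤ sh x := by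
  rw [sh_eq_aux]
  exact div_nonneg (Real.negMulLog_nonneg h0 h1) (Real.log_nonneg (by norm_num))

theorem sh_cont_aux : Continuous sh := by
  have : sh = fun x => Real.negMulLog x / Real.log 2 := funext sh_eq_aux
  rw [this]
  exact Real.continuous_negMulLog.div_const _

theorem sh_four_aux {q a b : ℝ} (ha : 0 ≤ a) (hb : 0 ≤ b) (hq : a + b ≤ q) :
    sh (q + a) + sh b ≤ sh q + sh (a + b) := by
  have key : Real.negMulLog (q + a) + Real.negMulLog b
      ≤ Real.negMulLog q + Real.negMulLog (a + b) := by
    rcases eq_or_lt_of_le (show 0 ≤ q + a - b by linarith) with h | h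
    · have h1 : a = 0 := by linarith
      have h2 : q = b := by linarith
      subst h1 h2
      simp
    · have hne : q + a - b ≠ 0 := ne_of_gt h
      have t0 : 0 ≤ (q - b) / (q + a - b) := div_nonneg (by linarith) h.le
      have s0 : 0 ≤ a / (q + a - b) := div_nonneg ha h.le
      have ts : (q - b) / (q + a - b) + a / (q + a - b) = 1 := by
        field_simp; ring
      have hx : b ∈ Set.Ici (0 : ℝ) := hb
      have hy : q + a ∈ Set.Ici (0 : ℝ) := by
        simp only [Set.mem_Ici]; linarith
      have c1 := Real.concaveOn_negMulLog.2 hx hy t0 s0 ts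
      have c2 := Real.concaveOn_negMulLog.2 hy hx t0 s0 ts
      simp only [smul_eq_mul] at c1 c2
      have e1 : (q - b) / (q + a - b) * b + a / (q + a - b) * (q + a) = a + b := by
        field_simp; ring
      have e2 : (q - b) / (q + a - b) * (q + a) + a / (q + a - b) * b = q := by
        field_simp; ring
      rw [e1] at c1
      rw [e2] at c2
      have e3 : ((q - b) / (q + a - b) + a / (q + a - b))
          * (Real.negMulLog (q + a) + Real.negMulLog b)
          ≤ Real.negMulLog q + Real.negMulLog (a + b) := by
        linarith
      rwa [ts, one_mul] at e3
  have hl : 0 < Real.log 2 := Real.log_pos (by norm_num)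
  simp only [sh_eq_aux, ← add_div]
  exact div_le_div_of_nonneg_right key hl.le

/-- Step (13) of Lemma II.1: with `P 0` of maximal measure, `P 0 ⊆ Q`, and
`Q_k = ⋃_{i ≤ k} (P i ∩ Q)`, for every `k`:
`sh(μ Q_k) + Σ_i sh(μ(P i ∖ Q_k)) ≥ sh(μ Q) + Σ_i sh(μ(P i ∖ Q))`, i.e.
`h(μ; {Q_k} ∪ P_{X∖Q_k}) ≥ h(μ; {Q} ∪ P_{X∖Q})`. -/
theorem stmt_9 {X : Type*} [MeasurableSpace X] (μ : Measure X) (hμ : μ Set.univ ≤ 1)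
    (P : ℕ → Set X) (hP : IsPartition μ P) (hfin : partEntropy μ P ≠ ⊤)
    (hmax : ∀ i, μ (P i) ≤ μ (P 0))
    (Q : Set X) (hQ : MeasurableSet Q) (hsub : P 0 ⊆ Q) (k : ℕ) :
    ENNReal.ofReal (sh ((μ Q).toReal)) +
        ∑' i, ENNReal.ofReal (sh ((μ (P i \ Q)).toReal)) ≤
      ENNReal.ofReal (sh ((μ (⋃ i ∈ Finset.range (k + 1), P i ∩ Q)).toReal)) +
        ∑' i, ENNReal.ofReal
          (sh ((μ (P i \ ⋃ j ∈ Finset.range (k + 1), P j ∩ Q)).toReal)) := by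
  obtain ⟨hm, hd, hc⟩ := hP
  have : IsFiniteMeasure μ := ⟨lt_of_le_of_lt hμ ENNReal.one_lt_top⟩
  have hle1 : ∀ s : Set X, μ.real s ≤ 1 := fun s =>
    ENNReal.toReal_le_of_le_ofReal zero_le_one (by
      simpa using (measure_mono (Set.subset_univ s)).trans hμ)
  have hsh : ∀ s : Set X, 0 ≤ sh (μ.real s) := fun s =>
    sh_nonneg_aux measureReal_nonneg (hle1 s)
  simp only [← measureReal_def]
  set R : ℕ → Set X := fun n => ⋃ j ∈ Finset.range (n + 1), P j ∩ Q with hR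
  have hmemR : ∀ n x, x ∈ R n ↔ ∃ j, j ≤ n ∧ x ∈ P j ∧ x ∈ Q := by
    intro n x
    simp only [hR, Set.mem_iUnion, Finset.mem_range, Set.mem_inter_iff, exists_prop,
      Nat.lt_succ_iff]
  have hRmono : Monotone R := by
    intro m n hmn x hx
    rw [hmemR] at hx ⊢
    obtain ⟨j, hj, h⟩ := hx
    exact ⟨j, hj.trans hmn, h⟩
  have hdis : ∀ {i j x}, x ∈ P i → x ∈ P j → i = j := by
    intro i j x hi hj
    by_contra hne
    exact Set.disjoint_left.1 (hd hne) hi hj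
  -- the union
  have hU : μ (⋃ n, R n) = μ Q := by
    apply le_antisymm
    · apply measure_mono
      intro x hx
      obtain ⟨n, hx⟩ := Set.mem_iUnion.1 hx
      obtain ⟨j, _, _, h⟩ := (hmemR n x).1 hx
      exact h
    · have : Q ⊆ (⋃ n, R n) ∪ (Set.univ \ ⋃ i, P i) := by
        intro x hx
        by_cases h : x ∈ ⋃ i, P i
        · left
          obtain ⟨i, hi⟩ := Set.mem_iUnion.1 h
          exact Set.mem_iUnion.2 ⟨i, (hmemR i x).2 ⟨i, le_rfl, hi, hx⟩⟩
        · right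
          exact ⟨trivial, h⟩
      calc μ Q ≤ _ := measure_mono this
        _ ≤ _ := measure_union_le _ _
        _ = _ := by rw [hc, add_zero]
  have hlim : Tendsto (fun n => μ.real (R n)) atTop (nhds (μ.real Q)) := by
    have h := tendsto_measure_iUnion_atTop (μ := μ) hRmono
    rw [hU] at h
    exact (ENNReal.tendsto_toReal (measure_ne_top μ Q)).comp h
  have hG : Tendsto (fun n => ENNReal.ofReal (sh (μ.real (R n))) +
      ∑ i ∈ Finset.range (n + 1), ENNReal.ofReal (sh (μ.real (P i \ Q)))) atTop
      (nhds (ENNReal.ofReal (sh (μ.real Q)) +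
        ∑' i, ENNReal.ofReal (sh (μ.real (P i \ Q))))) := by
    apply Tendsto.add
    · exact ENNReal.tendsto_ofReal ((sh_cont_aux.tendsto _).comp hlim)
    · exact (ENNReal.tendsto_nat_tsum _).comp (tendsto_add_atTop_nat 1)
  have hlow : ∀ i, i ≤ k → P i \ R k = P i \ Q := by
    intro i hi
    ext x
    simp only [Set.mem_sdiff, hmemR, not_exists, not_and]
    constructor
    · rintro ⟨h1, h2⟩
      exact ⟨h1, h2 i hi h1⟩
    · rintro ⟨h1, h2⟩
      exact ⟨h1, fun _ _ _ => h2⟩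
  have hhigh : ∀ n i, n < i → Disjoint (P i) (R n) := by
    intro n i hi
    rw [Set.disjoint_left]
    intro x hx hx'
    obtain ⟨j, hj, h1, _⟩ := (hmemR n x).1 hx'
    have := hdis hx h1
    omega
  have hstep : ∀ n, k ≤ n → ENNReal.ofReal (sh (μ.real (R n))) +
      ∑ i ∈ Finset.range (n + 1), ENNReal.ofReal (sh (μ.real (P i \ Q))) ≤
      ENNReal.ofReal (sh (μ.real (R k))) +
      ∑ i ∈ Finset.range (n + 1), ENNReal.ofReal (sh (μ.real (P i \ R k))) := by
    intro n hn
    induction n, hn using Nat.le_induction with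
    | base =>
      apply le_of_eq
      congr 1
      apply Finset.sum_congr rfl
      intro i hi
      rw [hlow i (Nat.lt_succ_iff.1 (Finset.mem_range.1 hi))]
    | succ n hn ih =>
      have hRs : R (n + 1) = R n ∪ (P (n + 1) ∩ Q) := by
        ext x
        simp only [Set.mem_union, hmemR, Set.mem_inter_iff]
        constructor
        · rintro ⟨j, hj, h⟩
          rcases Nat.lt_or_ge n j with hlt | hge
          · right
            have : j = n + 1 := by omega
            exact this ▸ h
          · exact Or.inl ⟨j, hge, h⟩
        · rintro (⟨j, hj, h⟩ | h)
          · exact ⟨j, by omega, h⟩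
          · exact ⟨n + 1, le_rfl, h⟩
      have hq : μ.real (R (n + 1)) = μ.real (R n) + μ.real (P (n + 1) ∩ Q) := by
        rw [hRs]
        exact measureReal_union
          ((hhigh n (n + 1) (Nat.lt_succ_self n)).symm.mono_right Set.inter_subset_left)
          ((hm _).inter hQ) (measure_ne_top _ _) (measure_ne_top _ _)
      have hp : μ.real (P (n + 1) ∩ Q) + μ.real (P (n + 1) \ Q) = μ.real (P (n + 1)) :=
        measureReal_inter_add_sdiff hQ
      have hbig : μ.real (P (n + 1)) ≤ μ.real (R n) := by
        apply ENNReal.toReal_mono (measure_ne_top _ _)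
        refine (hmax _).trans (measure_mono ?_)
        intro x hx
        exact (hmemR n x).2 ⟨0, Nat.zero_le _, hx, hsub hx⟩
      have h4 := sh_four_aux (q := μ.real (R n)) (a := μ.real (P (n + 1) ∩ Q))
        (b := μ.real (P (n + 1) \ Q)) measureReal_nonneg measureReal_nonneg (by linarith)
      rw [← hq, hp] at h4
      have h5 : ENNReal.ofReal (sh (μ.real (R (n + 1))))
          + ENNReal.ofReal (sh (μ.real (P (n + 1) \ Q)))
          ≤ ENNReal.ofReal (sh (μ.real (R n))) + ENNReal.ofReal (sh (μ.real (P (n + 1)))) := by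
        rw [← ENNReal.ofReal_add (hsh _) (hsh _), ← ENNReal.ofReal_add (hsh _) (hsh _)]
        exact ENNReal.ofReal_le_ofReal h4
      have h6 : P (n + 1) \ R k = P (n + 1) :=
        (hhigh k (n + 1) (by omega)).sdiff_eq_left
      rw [Finset.sum_range_succ _ (n + 1), Finset.sum_range_succ _ (n + 1), h6, ← add_assoc,
        add_right_comm]
      calc _ ≤ _ := add_le_add_left h5 _
        _ = _ := add_right_comm _ _ _
        _ ≤ _ := add_le_add_left ih _
        _ = _ := add_assoc _ _ _
  refine le_of_tendsto hG ?_
  filter_upwards [eventually_ge_atTop k] with n hn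
  exact (hstep n hn).trans (add_le_add_right (ENNReal.sum_le_tsum _) _)
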